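/- Separation theorem, converse part under the source semi-strong converse property (Theorem 6.7, part 2, source version, spectral form). Let V = {Vⁿ} be a general source with the property that for every strictly increasing sequence of positive integers n₁ < n₂ < … it holds that p-limsup_{i→∞} (1/n_i) log(1/P_{V^{n_i}}(V^{n_i})) = H̄(V), and let W = {Wⁿ} be a general channel. If V is transmissible over W, then H̄(V) ≤ sup_X I_(X;Y), where the supremum is over all channel inputs X = {Xⁿ} and Yⁿ is the channel output of Wⁿ on input Xⁿ. -/

import Mathlib

open Filter Real Topology

namespace ISC

/-- Words of length `n` over alphabet `A`. -/
abbrev Word (A : Type*) (n : ℕ) : Type _ := Fin n → A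

/-- `p` is a probability mass function. -/
def IsPMF {α : Type*} (p : α → ℝ) : Prop :=
  (∀ a, 0 ≤ p a) ∧ HasSum p 1

/-- Probability of the event `S` under the pmf `p`. -/
noncomputable def prob {α : Type*} (p : α → ℝ) (S : Set α) : ℝ :=
  ∑' a, S.indicator p a

/-- Output marginal `P_{Yⁿ}` of the channel `W` fed with the joint input law `P_{VⁿXⁿ}`. -/
noncomputable def outDist {𝒱 𝒳 𝒴 : Type*} {n : ℕ}
    (PVX : Word 𝒱 n × Word 𝒳 n → ℝ) (W : Word 𝒳 n → Word 𝒴 n → ℝ)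
    (y : Word 𝒴 n) : ℝ :=
  ∑' vx : Word 𝒱 n × Word 𝒳 n, PVX vx * W vx.2 y

/-- Joint law of `(Vⁿ, Xⁿ, Yⁿ)`: `P_{VⁿXⁿ}(v,x) · Wⁿ(y|x)`. -/
noncomputable def jointLaw {𝒱 𝒳 𝒴 : Type*} {n : ℕ}
    (PVX : Word 𝒱 n × Word 𝒳 n → ℝ) (W : Word 𝒳 n → Word 𝒴 n → ℝ) :
    Word 𝒱 n × Word 𝒳 n × Word 𝒴 n → ℝ :=
  fun z => PVX (z.1, z.2.1) * W z.2.1 z.2.2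

/-- The joint input law `P_{VⁿXⁿ}` induced by the deterministic encoder `φ`:
`P_{Vⁿ}(v) 1{x = φ(v)}`. -/
noncomputable def codeInput {𝒱 𝒳 : Type*} [DecidableEq 𝒳] {n : ℕ} (PV : Word 𝒱 n → ℝ)
    (φ : Word 𝒱 n → Word 𝒳 n) : Word 𝒱 n × Word 𝒳 n → ℝ :=
  fun vx => if vx.2 = φ vx.1 then PV vx.1 else 0

/-- Error probability `εₙ` of the joint source-channel code `(φ, ψ)`. -/
noncomputable def errProb {𝒱 𝒳 𝒴 : Type*} {n : ℕ}
    (PV : Word 𝒱 n → ℝ) (W : Word 𝒳 n → Word 𝒴 n → ℝ)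
    (φ : Word 𝒱 n → Word 𝒳 n) (ψ : Word 𝒴 n → Word 𝒱 n) : ℝ :=
  ∑' v, PV v * prob (W (φ v)) {y | ψ y ≠ v}

/-- `V` is transmissible over `W`. -/
def Transmissible {𝒱 𝒳 𝒴 : Type*} (PV : (n : ℕ) → Word 𝒱 n → ℝ)
    (W : (n : ℕ) → Word 𝒳 n → Word 𝒴 n → ℝ) : Prop :=
  ∃ (φ : (n : ℕ) → Word 𝒱 n → Word 𝒳 n) (ψ : (n : ℕ) → Word 𝒴 n → Word 𝒱 n),
    Tendsto (fun n => errProb (PV n) (W n) (φ n) (ψ n)) atTop (nhds 0)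

/-- Output marginal of the channel `W` for an input distribution `P_{Xⁿ}`. -/
noncomputable def outDistX {𝒳 𝒴 : Type*} {n : ℕ}
    (PX : Word 𝒳 n → ℝ) (W : Word 𝒳 n → Word 𝒴 n → ℝ) (y : Word 𝒴 n) : ℝ :=
  ∑' x : Word 𝒳 n, PX x * W x y

/-- Joint law of `(Xⁿ, Yⁿ)`: `P_{Xⁿ}(x) · Wⁿ(y|x)`. -/
noncomputable def jointXY {𝒳 𝒴 : Type*} {n : ℕ}
    (PX : Word 𝒳 n → ℝ) (W : Word 𝒳 n → Word 𝒴 n → ℝ) :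
    Word 𝒳 n × Word 𝒴 n → ℝ :=
  fun z => PX z.1 * W z.1 z.2

/-- Limit superior in probability of a sequence of random variables `Z i`
distributed according to the pmfs `p i`. -/
noncomputable def plimsup {α : ℕ → Type*} (p : (i : ℕ) → α i → ℝ)
    (Z : (i : ℕ) → α i → ℝ) : EReal :=
  sInf {β : EReal |
    Tendsto (fun i => prob (p i) {a | β < (Z i a : EReal)}) atTop (nhds 0)}

/-- Limit inferior in probability of a sequence of random variables `Z i`
distributed according to the pmfs `p i`. -/
noncomputable def pliminf {α : ℕ → Type*} (p : (i : ℕ) → α i → ℝ)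
    (Z : (i : ℕ) → α i → ℝ) : EReal :=
  sSup {β : EReal |
    Tendsto (fun i => prob (p i) {a | (Z i a : EReal) < β}) atTop (nhds 0)}

/-- Spectral sup-entropy rate `H̄(V)`. -/
noncomputable def Hbar {𝒱 : Type*} (PV : (n : ℕ) → Word 𝒱 n → ℝ) : EReal :=
  plimsup (fun n => PV n) (fun n v => (1 / (n : ℝ)) * Real.log (1 / PV n v))

/-- Spectral inf-entropy rate `H_(V)`. -/
noncomputable def Hlow {𝒱 : Type*} (PV : (n : ℕ) → Word 𝒱 n → ℝ) : EReal :=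
  pliminf (fun n => PV n) (fun n v => (1 / (n : ℝ)) * Real.log (1 / PV n v))

/-- Spectral inf-information rate `I_(X;Y)` of the channel `W` with input `X`. -/
noncomputable def Ilow {𝒳 𝒴 : Type*} (PX : (n : ℕ) → Word 𝒳 n → ℝ)
    (W : (n : ℕ) → Word 𝒳 n → Word 𝒴 n → ℝ) : EReal :=
  pliminf (fun n => jointXY (PX n) (W n))
    (fun n z => (1 / (n : ℝ)) * Real.log (W n z.1 z.2 / outDistX (PX n) (W n) z.2))

/-- Spectral sup-information rate `Ī(X;Y)` of the channel `W` with input `X`. -/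
noncomputable def Ihigh {𝒳 𝒴 : Type*} (PX : (n : ℕ) → Word 𝒳 n → ℝ)
    (W : (n : ℕ) → Word 𝒳 n → Word 𝒴 n → ℝ) : EReal :=
  plimsup (fun n => jointXY (PX n) (W n))
    (fun n z => (1 / (n : ℝ)) * Real.log (W n z.1 z.2 / outDistX (PX n) (W n) z.2))

/-- `sup_X I_(X;Y)`: the supremum over all channel inputs. -/
noncomputable def supIlow {𝒳 𝒴 : Type*}
    (W : (n : ℕ) → Word 𝒳 n → Word 𝒴 n → ℝ) : EReal :=
  ⨆ PX : {PX : (n : ℕ) → Word 𝒳 n → ℝ // ∀ n, IsPMF (PX n)}, Ilow PX.1 W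


lemma prob_ofReal {α : Type*} {p : α → ℝ} (hp0 : ∀ a, 0 ≤ p a) (hs : Summable p) (S : Set α) :
    ENNReal.ofReal (prob p S) = ∑' a, S.indicator (fun a => ENNReal.ofReal (p a)) a := by
  unfold prob
  rw [ENNReal.ofReal_tsum_of_nonneg (fun a => Set.indicator_nonneg (fun a _ => hp0 a) a)
    (hs.indicator S)]
  congr 1
  ext a
  by_cases h : a ∈ S <;> simp [h]

lemma prob_nonneg {α : Type*} {p : α → ℝ} (hp0 : ∀ a, 0 ≤ p a) (S : Set α) : 0 ≤ prob p S :=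
  tsum_nonneg (fun a => Set.indicator_nonneg (fun a _ => hp0 a) a)

lemma prob_le_one {α : Type*} {p : α → ℝ} (hp : IsPMF p) (S : Set α) : prob p S ≤ 1 := by
  rw [← hp.2.tsum_eq]
  exact (hp.2.summable.indicator S).tsum_le_tsum
    (fun a => Set.indicator_le_self' (fun a _ => hp.1 a) a) hp.2.summable

lemma ofReal_tsum_pmf {α : Type*} {p : α → ℝ} (hp : IsPMF p) :
    ∑' a, ENNReal.ofReal (p a) = 1 := by
  rw [← ENNReal.ofReal_tsum_of_nonneg hp.1 hp.2.summable, hp.2.tsum_eq, ENNReal.ofReal_one]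

open Classical in
lemma core_enn {V X Y : Type*} (μ : V → ENNReal) (hμ : ∑' v, μ v = 1)
    (w : X → Y → ENNReal) (hw : ∀ x, ∑' y, w x y = 1) (φ : V → X) (ψ : Y → V)
    (q : X → ENNReal) (hq : ∀ x, q x = ∑' v, if φ v = x then μ v else 0) :
    (∑' x, q x = 1) ∧
    (∀ f : X → ENNReal, ∑' x, q x * f x = ∑' v, μ v * f (φ v)) ∧
    ∀ (K : ENNReal) (E : Set (X × Y)),
      (∀ v y, (φ v, y) ∈ E → μ v * w (φ v) y ≤ K * ∑' x, q x * w x y) →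
      ∑' z : X × Y, E.indicator (fun z => q z.1 * w z.1 z.2) z ≤
        ∑' v, μ v * (∑' y, {y | ψ y ≠ v}.indicator (w (φ v)) y) + K := by
  have hpush : ∀ f : X → ENNReal, ∑' x, q x * f x = ∑' v, μ v * f (φ v) := by
    intro f
    simp_rw [hq, ← ENNReal.tsum_mul_right]
    rw [ENNReal.tsum_comm]
    congr 1; ext v
    rw [tsum_eq_single (φ v)]
    · simp
    · intro x hx; simp [Ne.symm hx]
  have h1 : ∑' x, q x = 1 := by
    have := hpush (fun _ => 1)
    simpa [hμ] using this
  refine ⟨h1, hpush, ?_⟩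
  intro K E hE
  have hPY : ∑' y, ∑' x, q x * w x y = 1 := by
    rw [ENNReal.tsum_comm]
    simp_rw [ENNReal.tsum_mul_left, hw, mul_one, h1]
  calc ∑' z : X × Y, E.indicator (fun z => q z.1 * w z.1 z.2) z
      = ∑' x, q x * ∑' y, (if (x, y) ∈ E then w x y else 0) := by
        rw [ENNReal.tsum_prod']
        simp_rw [← ENNReal.tsum_mul_left]
        congr 1; ext x; congr 1; ext y
        by_cases h : (x, y) ∈ E <;> simp [h]
    _ = ∑' v, ∑' y, μ v * (if (φ v, y) ∈ E then w (φ v) y else 0) := by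
        rw [hpush]
        simp_rw [ENNReal.tsum_mul_left]
    _ ≤ ∑' v, ∑' y, (μ v * {y | ψ y ≠ v}.indicator (w (φ v)) y +
          if v = ψ y then K * ∑' x, q x * w x y else 0) := by
        refine ENNReal.tsum_le_tsum fun v => ENNReal.tsum_le_tsum fun y => ?_
        by_cases h : ψ y = v
        · by_cases h' : (φ v, y) ∈ E
          · simpa [h, h'] using hE v y h'
          · simp [h']
        · by_cases h' : (φ v, y) ∈ E
          · simp [h, h', Ne.symm h]
          · simp [h']
    _ = ∑' v, μ v * (∑' y, {y | ψ y ≠ v}.indicator (w (φ v)) y) + K := by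
        simp_rw [ENNReal.tsum_add, ENNReal.tsum_mul_left]
        congr 1
        rw [ENNReal.tsum_comm]
        simp_rw [tsum_ite_eq]
        rw [ENNReal.tsum_mul_left, hPY, mul_one]

set_option maxHeartbeats 1000000 in
lemma core {V X Y : Type*} (μ : V → ℝ) (hμ : IsPMF μ)
    (w : X → Y → ℝ) (hw : ∀ x, IsPMF (w x)) (φ : V → X) (ψ : Y → V) :
    ∃ PX : X → ℝ, IsPMF PX ∧ (∀ y, 0 ≤ ∑' x, PX x * w x y) ∧
    (∀ v y, μ v * w (φ v) y ≤ ∑' x, PX x * w x y) ∧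
    ∀ (K : ℝ) (E : Set (X × Y)), 0 ≤ K →
      (∀ v y, (φ v, y) ∈ E → μ v * w (φ v) y ≤ K * ∑' x, PX x * w x y) →
      prob (fun z : X × Y => PX z.1 * w z.1 z.2) E ≤
        ∑' v, μ v * prob (w (φ v)) {y | ψ y ≠ v} + K := by
  classical
  obtain ⟨q, hq⟩ : ∃ q : X → ENNReal,
      ∀ x, q x = ∑' v, if φ v = x then ENNReal.ofReal (μ v) else 0 := ⟨_, fun _ => rfl⟩
  obtain ⟨h1, hpush, hmain⟩ := core_enn (fun v => ENNReal.ofReal (μ v)) (ofReal_tsum_pmf hμ)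
    (fun x y => ENNReal.ofReal (w x y)) (fun x => ofReal_tsum_pmf (hw x)) φ ψ q hq
  have hqtop : ∀ x, q x ≠ ⊤ := fun x => by
    have : q x ≤ 1 := h1 ▸ ENNReal.le_tsum x
    exact ne_top_of_le_ne_top ENNReal.one_ne_top this
  have hPXpmf : IsPMF (fun x => (q x).toReal) := by
    refine ⟨fun _ => ENNReal.toReal_nonneg, ?_⟩
    have hs : Summable (fun x => (q x).toReal) := ENNReal.summable_toReal (by rw [h1]; simp)
    have : ∑' x, (q x).toReal = 1 := by
      rw [← ENNReal.tsum_toReal_eq hqtop, h1]; simp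
    rw [← this]; exact hs.hasSum
  have hw1 : ∀ x y, w x y ≤ 1 := fun x y => by
    rw [← (hw x).2.tsum_eq]
    exact (hw x).2.summable.le_tsum y (fun j _ => (hw x).1 j)
  have hsum : ∀ y, Summable (fun x => (q x).toReal * w x y) := fun y =>
    Summable.of_nonneg_of_le (fun x => mul_nonneg ENNReal.toReal_nonneg ((hw x).1 y))
      (fun x => mul_le_of_le_one_right ENNReal.toReal_nonneg (hw1 x y)) hPXpmf.2.summable
  have hPY : ∀ y, ENNReal.ofReal (∑' x, (q x).toReal * w x y)
      = ∑' x, q x * ENNReal.ofReal (w x y) := fun y => by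
    rw [ENNReal.ofReal_tsum_of_nonneg
      (fun x => mul_nonneg ENNReal.toReal_nonneg ((hw x).1 y)) (hsum y)]
    congr 1; ext x
    rw [ENNReal.ofReal_mul ENNReal.toReal_nonneg, ENNReal.ofReal_toReal (hqtop x)]
  have hPY0 : ∀ y, 0 ≤ ∑' x, (q x).toReal * w x y := fun y =>
    tsum_nonneg (fun x => mul_nonneg ENNReal.toReal_nonneg ((hw x).1 y))
  have hp0 : ∀ z : X × Y, 0 ≤ (q z.1).toReal * w z.1 z.2 := fun z =>
    mul_nonneg ENNReal.toReal_nonneg ((hw z.1).1 z.2)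
  have hjs : Summable (fun z : X × Y => (q z.1).toReal * w z.1 z.2) := by
    refine (summable_prod_of_nonneg (f := fun z : X × Y => (q z.1).toReal * w z.1 z.2) hp0).2
      ⟨fun x => Summable.mul_left (q x).toReal (hw x).2.summable, ?_⟩
    have he : (fun x => ∑' y, (q x).toReal * w x y) = fun x => (q x).toReal := by
      funext x
      rw [tsum_mul_left, (hw x).2.tsum_eq, mul_one]
    exact he ▸ hPXpmf.2.summable
  refine ⟨fun x => (q x).toReal, hPXpmf, hPY0, ?_, ?_⟩
  · intro v y
    rw [← ENNReal.ofReal_le_ofReal_iff (hPY0 y), hPY, hpush, ENNReal.ofReal_mul (hμ.1 v)]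
    exact ENNReal.le_tsum (f := fun v => ENNReal.ofReal (μ v) * ENNReal.ofReal (w (φ v) y)) v
  · intro K E hK hE
    have hes : Summable (fun v => μ v * prob (w (φ v)) {y | ψ y ≠ v}) :=
      Summable.of_nonneg_of_le (fun v => mul_nonneg (hμ.1 v) (prob_nonneg (hw _).1 _))
        (fun v => mul_le_of_le_one_right (hμ.1 v) (prob_le_one (hw _) _)) hμ.2.summable
    have he0 : 0 ≤ ∑' v, μ v * prob (w (φ v)) {y | ψ y ≠ v} :=
      tsum_nonneg (fun v => mul_nonneg (hμ.1 v) (prob_nonneg (hw _).1 _))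
    rw [← ENNReal.ofReal_le_ofReal_iff (by positivity), prob_ofReal hp0 hjs,
      ENNReal.ofReal_add he0 hK, ENNReal.ofReal_tsum_of_nonneg
        (fun v => mul_nonneg (hμ.1 v) (prob_nonneg (hw _).1 _)) hes]
    have := hmain (ENNReal.ofReal K) E (by
      intro v y hvy
      rw [← hPY, ← ENNReal.ofReal_mul (hμ.1 v), ← ENNReal.ofReal_mul hK]
      exact ENNReal.ofReal_le_ofReal (hE v y hvy))
    convert this using 2
    · congr 1; ext z
      refine congrArg (fun f => E.indicator f z) (funext fun a => ?_)
      rw [ENNReal.ofReal_mul ENNReal.toReal_nonneg, ENNReal.ofReal_toReal (hqtop _)]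
    · congr 1; ext v
      rw [ENNReal.ofReal_mul (hμ.1 v), prob_ofReal (hw _).1 (hw _).2.summable]

lemma cond_pmf {V : Type*} (p : V → ℝ) (hp : IsPMF p) (A : Set V) :
    ∃ μ : V → ℝ, IsPMF μ ∧ ∀ δ, 0 < δ → δ ≤ prob p A →
      (∀ v, μ v ≤ p v / δ) ∧ ∀ v, μ v ≠ 0 → v ∈ A := by
  by_cases h : 0 < prob p A
  · refine ⟨fun v => A.indicator p v / prob p A, ⟨fun v => ?_, ?_⟩, ?_⟩
    · exact div_nonneg (Set.indicator_nonneg (fun a _ => hp.1 a) v) h.le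
    · have := (hp.2.summable.indicator A).hasSum.div_const (prob p A)
      rwa [← prob, div_self h.ne'] at this
    · intro δ hδ hle
      refine ⟨fun v => ?_, fun v hv => ?_⟩
      · have h1 : A.indicator p v ≤ p v := Set.indicator_le_self' (fun a _ => hp.1 a) v
        exact div_le_div₀ (hp.1 v) h1 hδ hle
      · by_contra hA
        simp [hA] at hv
  · exact ⟨p, hp, fun δ h1 h2 => absurd (h1.trans_le h2) h⟩

/-- **Separation theorem, converse part under the source semi-strong converse property**
(Theorem 6.7, part 2, source version, spectral form). -/
theorem separation_converse_source_semi_strong_converse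
    {𝒱 𝒳 𝒴 : Type} [Countable 𝒱] [Countable 𝒳] [Countable 𝒴]
    (PV : (n : ℕ) → Word 𝒱 n → ℝ) (hPV : ∀ n, IsPMF (PV n))
    (W : (n : ℕ) → Word 𝒳 n → Word 𝒴 n → ℝ) (hW : ∀ n x, IsPMF (W n x))
    (hssc : ∀ ns : ℕ → ℕ, StrictMono ns → 0 < ns 0 →
      plimsup (fun i => PV (ns i))
        (fun i v => (1 / (ns i : ℝ)) * Real.log (1 / PV (ns i) v)) = Hbar PV)
    (htrans : Transmissible PV W) :
    Hbar PV ≤ supIlow W := by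
  obtain ⟨φ, ψ, herr⟩ := htrans
  refine le_of_forall_lt fun c hc => ?_
  obtain ⟨b', hcb', hb'⟩ := EReal.lt_iff_exists_real_btwn.1 hc
  obtain ⟨b, hbb, hb⟩ := EReal.lt_iff_exists_real_btwn.1 hb'
  have hbb' : b' < b := by exact_mod_cast hbb
  refine hcb'.trans_le ?_
  set A : (n : ℕ) → Set (Word 𝒱 n) := fun n =>
    {v | (b : EReal) < (((1 / (n : ℝ)) * Real.log (1 / PV n v) : ℝ) : EReal)} with hA
  have hδ : ∃ δ : ℝ, 0 < δ ∧ ∀ᶠ n in atTop, δ ≤ prob (PV n) (A n) := by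
    by_contra hcon
    push Not at hcon
    have hfr : ∀ k : ℕ, ∃ᶠ n in atTop,
        prob (PV n) (A n) < 1 / ((k : ℝ) + 1) ∧ 0 < n := fun k =>
      (hcon (1 / ((k : ℝ) + 1)) (by positivity)).and_eventually (eventually_gt_atTop 0)
    obtain ⟨ns, hmono, hns⟩ := extraction_forall_of_frequently hfr
    have hle : Hbar PV ≤ (b : EReal) := by
      rw [← hssc ns hmono (hns 0).2]
      refine sInf_le ?_
      exact squeeze_zero (fun i => prob_nonneg (hPV _).1 _) (fun i => (hns i).1.le)
        tendsto_one_div_add_atTop_nhds_zero_nat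
    exact absurd hb (not_lt.2 hle)
  obtain ⟨δ, hδ0, hδ⟩ := hδ
  choose μ hμ hμA using fun n => cond_pmf (PV n) (hPV n) (A n)
  choose PX hPX hPY0 hPYle hmain using fun n => core (μ n) (hμ n) (W n) (hW n) (φ n) (ψ n)
  refine le_trans ?_ (le_iSup (fun PX : {PX : (n : ℕ) → Word 𝒳 n → ℝ // ∀ n, IsPMF (PX n)} =>
    Ilow PX.1 W) ⟨PX, hPX⟩)
  refine le_sSup ?_
  have hlim : Tendsto (fun n : ℕ => errProb (PV n) (W n) (φ n) (ψ n) / δ +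
      Real.exp (-(b - b')) ^ n / δ) atTop (nhds 0) := by
    have h2 : Tendsto (fun n : ℕ => Real.exp (-(b - b')) ^ n) atTop (nhds 0) :=
      tendsto_pow_atTop_nhds_zero_of_lt_one (Real.exp_pos _).le
        (by rw [Real.exp_lt_one_iff]; linarith)
    simpa using (herr.div_const δ).add (h2.div_const δ)
  refine squeeze_zero' (Eventually.of_forall fun n => prob_nonneg
    (fun z => mul_nonneg ((hPX n).1 _) ((hW n _).1 _)) _) ?_ hlim
  filter_upwards [hδ, eventually_gt_atTop 0] with n hn hn0
  obtain ⟨hμle, hμmem⟩ := hμA n δ hδ0 hn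
  have hnR : (0 : ℝ) < n := by exact_mod_cast hn0
  refine (hmain n (Real.exp (-(b - b')) ^ n / δ) _ (by positivity) ?_).trans ?_
  · intro v y hE
    have hE' : (1 / (n : ℝ)) * Real.log (W n (φ n v) y / outDistX (PX n) (W n) y) < b' := by
      exact_mod_cast hE
    by_cases h0 : μ n v * W n (φ n v) y = 0
    · rw [h0]; exact mul_nonneg (by positivity) (hPY0 n y)
    have hμ0 : μ n v ≠ 0 := left_ne_zero_of_mul h0
    have hw0 : 0 < W n (φ n v) y := lt_of_le_of_ne ((hW n _).1 y) (right_ne_zero_of_mul h0).symm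
    have hμpos : 0 < μ n v := lt_of_le_of_ne ((hμ n).1 v) hμ0.symm
    have hP : 0 < outDistX (PX n) (W n) y := (mul_pos hμpos hw0).trans_le (hPYle n v y)
    have hPVpos : 0 < PV n v := by
      by_contra hc
      have := hμle v
      have h3 : PV n v / δ ≤ 0 := div_nonpos_of_nonpos_of_nonneg (not_lt.1 hc) hδ0.le
      linarith
    have hvA : b < (1 / (n : ℝ)) * Real.log (1 / PV n v) := by
      exact EReal.coe_lt_coe_iff.1 (hμmem v hμ0)
    have e1 : W n (φ n v) y ≤ Real.exp (n * b') * outDistX (PX n) (W n) y := by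
      rw [← div_le_iff₀ hP]
      rw [← Real.log_le_iff_le_exp (div_pos hw0 hP)]
      rw [one_div, inv_mul_lt_iff₀ hnR] at hE'
      exact hE'.le
    have e2 : PV n v ≤ Real.exp (-(n * b)) := by
      rw [one_div, lt_inv_mul_iff₀ hnR, one_div, Real.log_inv] at hvA
      rw [← Real.log_le_iff_le_exp hPVpos]
      linarith
    calc μ n v * W n (φ n v) y
        ≤ (Real.exp (-(n * b)) / δ) * (Real.exp (n * b') * outDistX (PX n) (W n) y) := by
          refine mul_le_mul ((hμle v).trans ?_) e1 hw0.le (by positivity)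
          gcongr
      _ = Real.exp (-(b - b')) ^ n / δ * outDistX (PX n) (W n) y := by
          rw [← Real.exp_nat_mul, show (n : ℝ) * -(b - b') = -(n * b) + n * b' by ring,
            Real.exp_add]
          ring
  · refine add_le_add_left ?_ _
    unfold errProb
    rw [← tsum_div_const]
    have hs : Summable (fun v => PV n v * prob (W n (φ n v)) {y | ψ n y ≠ v}) :=
      Summable.of_nonneg_of_le (fun v => mul_nonneg ((hPV n).1 v) (prob_nonneg (hW n _).1 _))
        (fun v => mul_le_of_le_one_right ((hPV n).1 v) (prob_le_one (hW n _) _))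
        (hPV n).2.summable
    have hle : ∀ v, μ n v * prob (W n (φ n v)) {y | ψ n y ≠ v} ≤
        PV n v * prob (W n (φ n v)) {y | ψ n y ≠ v} / δ := fun v => by
      rw [mul_div_right_comm]
      exact mul_le_mul_of_nonneg_right (hμle v) (prob_nonneg (hW n _).1 _)
    exact Summable.tsum_le_tsum hle (Summable.of_nonneg_of_le
      (fun v => mul_nonneg ((hμ n).1 v) (prob_nonneg (hW n _).1 _)) hle (hs.div_const δ))
      (hs.div_const δ)

end ISC
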